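/- For all n, k ∈ ℕ, the language S_{n·k} = { b(aⁱb)^{2·n·k} | i ≥ 1 } over {a,b} belongs to L(CD_{2n+1}, CF−λ, (t∧≤k+1)), i.e., it can be generated by a CD grammar system with 2n+1 λ-free context-free components working in the (t∧≤k+1)-mode. -/

import Mathlib

namespace CDHybrid

/-- Symbols: nonterminals are natural numbers, terminals come from `T`. -/
abbrev Symb (T : Type) := ℕ ⊕ T

/-- Sentential forms. -/
abbrev SForm (T : Type) := List (Symb T)

/-- A context-free rule `A → z`. -/
abbrev Rule (T : Type) := ℕ × SForm T

/-- Number of nonterminal occurrences in a sentential form. -/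
def ntCount {T : Type} (x : SForm T) : ℕ := (x.filter Sum.isLeft).length

/-- One rewriting step using some rule of the rule set `P`. -/
def RStep {T : Type} (P : List (Rule T)) (x y : SForm T) : Prop :=
  ∃ r ∈ P, ∃ u v : SForm T, x = u ++ Sum.inl r.1 :: v ∧ y = u ++ r.2 ++ v

/-- `m`-step derivation using only rules of `P`. -/
def StepsN {T : Type} (P : List (Rule T)) : ℕ → SForm T → SForm T → Prop
  | 0, x, y => x = y
  | m + 1, x, y => ∃ z, RStep P x z ∧ StepsN P m z y

/-- `m`-step derivation using only rules of `P`, all intermediate (and the final)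
sentential forms having at most `b` occurrences of nonterminals. -/
def StepsNB {T : Type} (P : List (Rule T)) (b : ℕ) : ℕ → SForm T → SForm T → Prop
  | 0, x, y => x = y
  | m + 1, x, y => ∃ z, RStep P x z ∧ ntCount z ≤ b ∧ StepsNB P b m z y

/-- Derivation modes of CD grammar systems. -/
inductive Mode where
  | eq : ℕ → Mode
  | le : ℕ → Mode
  | ge : ℕ → Mode
  | star : Mode
  | t : Mode
  | conj : Mode → Mode → Mode

/-- The predicate of a derivation mode: `modeOK P f m y` holds if an `m`-step
derivation by the component `P` ending in `y` is acceptable for mode `f`. -/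
def modeOK {T : Type} (P : List (Rule T)) : Mode → ℕ → SForm T → Prop
  | .eq k, m, _ => m = k
  | .le k, m, _ => m ≤ k
  | .ge k, m, _ => k ≤ m
  | .star, _, _ => True
  | .t, _, y => ¬ ∃ z, RStep P y z
  | .conj f g, m, y => modeOK P f m y ∧ modeOK P g m y

/-- A CD grammar system with context-free components. -/
structure CDGS (T : Type) where
  deg : ℕ
  start : ℕ
  comp : Fin deg → List (Rule T)

/-- λ-freeness: no erasing rules. -/
def CDGS.LamFree {T : Type} (G : CDGS T) : Prop :=
  ∀ i : Fin G.deg, ∀ r ∈ G.comp i, r.2 ≠ []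

/-- One derivation step of a component of `G` in mode `f`. -/
def CDGS.ModeStep {T : Type} (G : CDGS T) (f : Mode) (x y : SForm T) : Prop :=
  ∃ i : Fin G.deg, ∃ m : ℕ, StepsN (G.comp i) m x y ∧ modeOK (G.comp i) f m y

/-- One derivation step of a component of `G` in mode `f`, with all produced
sentential forms having at most `b` nonterminal occurrences. -/
def CDGS.ModeStepB {T : Type} (G : CDGS T) (f : Mode) (b : ℕ) (x y : SForm T) : Prop :=
  ∃ i : Fin G.deg, ∃ m : ℕ, StepsNB (G.comp i) b m x y ∧ modeOK (G.comp i) f m y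

/-- The language generated by `G` in mode `f`. -/
def CDGS.lang {T : Type} (G : CDGS T) (f : Mode) : Set (List T) :=
  { w | Relation.TransGen (G.ModeStep f) [Sum.inl G.start] (w.map Sum.inr) }

/-- The words of the language of `G` in mode `f` possessing a derivation of index
at most `b`, i.e., all sentential forms occurring in it have at most `b`
nonterminal occurrences. -/
def CDGS.langB {T : Type} (G : CDGS T) (f : Mode) (b : ℕ) : Set (List T) :=
  { w | ntCount ([Sum.inl G.start] : SForm T) ≤ b ∧
      Relation.TransGen (G.ModeStepB f b) [Sum.inl G.start] (w.map Sum.inr) }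

/-- Two languages are considered equal iff they differ at most in the empty word. -/
def EqL {T : Type} (L₁ L₂ : Set (List T)) : Prop := L₁ \ {[]} = L₂ \ {[]}

/-- The family `L(CD_n, CF[−λ], f)`; `lf = true` forbids erasing rules. -/
def CDFam (T : Type) (lf : Bool) (n : ℕ) (f : Mode) : Set (Set (List T)) :=
  { L | ∃ G : CDGS T, G.deg ≤ n ∧ (lf = true → G.LamFree) ∧ EqL (G.lang f) L }

/-- The family `L(CD_∞, CF[−λ], f)`. -/
def CDFamInf (T : Type) (lf : Bool) (f : Mode) : Set (Set (List T)) :=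
  { L | ∃ G : CDGS T, (lf = true → G.LamFree) ∧ EqL (G.lang f) L }

/-- The family `L_m(CD_n, CF[−λ], f)` of such languages of index at most `m`. -/
def CDFamInd (T : Type) (lf : Bool) (n : ℕ) (f : Mode) (m : ℕ) : Set (Set (List T)) :=
  { L | ∃ G : CDGS T, G.deg ≤ n ∧ (lf = true → G.LamFree) ∧ EqL (G.lang f) L ∧
      G.lang f ⊆ G.langB f m }

/-- The family `L_m(CD_∞, CF[−λ], f)`. -/
def CDFamIndInf (T : Type) (lf : Bool) (f : Mode) (m : ℕ) : Set (Set (List T)) :=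
  { L | ∃ G : CDGS T, (lf = true → G.LamFree) ∧ EqL (G.lang f) L ∧ G.lang f ⊆ G.langB f m }

/-- The family `L_fin(CD_∞, CF[−λ], f)`. -/
def CDFamFinInf (T : Type) (lf : Bool) (f : Mode) : Set (Set (List T)) :=
  { L | ∃ m : ℕ, 1 ≤ m ∧ L ∈ CDFamIndInf T lf f m }

/-- A context-free grammar. -/
structure CFG (T : Type) where
  start : ℕ
  rules : List (Rule T)

/-- The language generated by a context-free grammar. -/
def CFG.lang {T : Type} (G : CFG T) : Set (List T) :=
  { w | Relation.ReflTransGen (RStep G.rules) [Sum.inl G.start] (w.map Sum.inr) }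

/-- The words of `G.lang` having a derivation of index at most `m`. -/
def CFG.langB {T : Type} (G : CFG T) (m : ℕ) : Set (List T) :=
  { w | ntCount ([Sum.inl G.start] : SForm T) ≤ m ∧
      Relation.ReflTransGen (fun x y => RStep G.rules x y ∧ ntCount y ≤ m)
        [Sum.inl G.start] (w.map Sum.inr) }

/-- The family `L(CF)` of context-free languages. -/
def CFFam (T : Type) : Set (Set (List T)) := { L | ∃ G : CFG T, EqL G.lang L }

/-- The family `L_m(CF)` of context-free languages of index at most `m`. -/
def CFFamInd (T : Type) (m : ℕ) : Set (Set (List T)) :=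
  { L | ∃ G : CFG T, EqL G.lang L ∧ G.lang ⊆ G.langB m }

/-- The family `L_fin(CF)` of context-free languages of finite index. -/
def CFFamFin (T : Type) : Set (Set (List T)) :=
  { L | ∃ m : ℕ, 1 ≤ m ∧ L ∈ CFFamInd T m }

/-- A grammar is linear if every right-hand side contains at most one nonterminal. -/
def CFG.Linear {T : Type} (G : CFG T) : Prop := ∀ r ∈ G.rules, ntCount r.2 ≤ 1

/-- The family `L(LIN)` of linear context-free languages. -/
def LinFam (T : Type) : Set (Set (List T)) :=
  { L | ∃ G : CFG T, G.Linear ∧ EqL G.lang L }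

/-- The family `L(FIN)` of finite languages. -/
def FinFam (T : Type) : Set (Set (List T)) := { L | L.Finite }

/-- A programmed grammar with context-free rules. -/
structure PG (T : Type) where
  start : ℕ
  nLab : ℕ
  rule : Fin nLab → Rule T
  succ : Fin nLab → Set (Fin nLab)
  fail : Fin nLab → Set (Fin nLab)

def PG.LamFree {T : Type} (G : PG T) : Prop := ∀ r : Fin G.nLab, (G.rule r).2 ≠ []

/-- No appearance checking: all failure fields are empty. -/
def PG.NoAC {T : Type} (G : PG T) : Prop := ∀ r : Fin G.nLab, G.fail r = ∅

/-- One step of a programmed grammar on pairs (sentential form, label). -/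
def PG.PStep {T : Type} (G : PG T) (p q : SForm T × Fin G.nLab) : Prop :=
  (∃ u v : SForm T, p.1 = u ++ Sum.inl (G.rule p.2).1 :: v ∧
      q.1 = u ++ (G.rule p.2).2 ++ v ∧ q.2 ∈ G.succ p.2) ∨
  (Sum.inl (G.rule p.2).1 ∉ p.1 ∧ q.1 = p.1 ∧ q.2 ∈ G.fail p.2)

/-- The language generated by a programmed grammar. -/
def PG.lang {T : Type} (G : PG T) : Set (List T) :=
  { w | ∃ r₁ r₂ : Fin G.nLab,
      Relation.ReflTransGen G.PStep ([Sum.inl G.start], r₁) (w.map Sum.inr, r₂) }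

/-- The words of `G.lang` having a derivation of index at most `m`. -/
def PG.langB {T : Type} (G : PG T) (m : ℕ) : Set (List T) :=
  { w | ∃ r₁ r₂ : Fin G.nLab, ntCount ([Sum.inl G.start] : SForm T) ≤ m ∧
      Relation.ReflTransGen (fun p q => G.PStep p q ∧ ntCount q.1 ≤ m)
        ([Sum.inl G.start], r₁) (w.map Sum.inr, r₂) }

/-- The family `L_m(P, CF[−λ][, ac])`: programmed languages of index at most `m`;
`ac = false` forbids appearance checking, `lf = true` forbids erasing rules. -/
def PFamInd (T : Type) (lf ac : Bool) (m : ℕ) : Set (Set (List T)) :=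
  { L | ∃ G : PG T, (lf = true → G.LamFree) ∧ (ac = false → G.NoAC) ∧
      EqL G.lang L ∧ G.lang ⊆ G.langB m }

/-- The family `L_fin(P, CF[−λ][, ac])` of programmed languages of finite index. -/
def PFamFin (T : Type) (lf ac : Bool) : Set (Set (List T)) :=
  { L | ∃ m : ℕ, 1 ≤ m ∧ L ∈ PFamInd T lf ac m }


/-- The word b(aⁱb)^{2m}, where a is encoded as 0 and b as 1. -/
def sepWord (m i : ℕ) : List ℕ :=
  1 :: (List.replicate (2 * m) (List.replicate i 0 ++ [1])).flatten

/-- The language S_m = { b(aⁱb)^{2m} | i ≥ 1 } over {a,b}. -/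
def sepLang (m : ℕ) : Set (List ℕ) := { w | ∃ i : ℕ, 1 ≤ i ∧ w = sepWord m i }

inductive Kd where
  | A | B | T | Dn

structure Blk where
  κ : Kd
  j : ℕ
  p : ℕ

def core : Kd → ℕ → SForm ℕ
  | .A, j => [Sum.inl (6 * j + 4)]
  | .B, j => [Sum.inl (6 * j + 5)]
  | .T, j => [Sum.inl (6 * j + 6)]
  | .Dn, _ => [Sum.inr 0, Sum.inr 1, Sum.inr 0]

def ntOf : Kd → ℕ → Option ℕ
  | .A, j => some (6 * j + 4)
  | .B, j => some (6 * j + 5)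
  | .T, j => some (6 * j + 6)
  | .Dn, _ => none

def wrap (p : ℕ) (z : SForm ℕ) : SForm ℕ :=
  List.replicate p (Sum.inr 0) ++ (z ++ (List.replicate p (Sum.inr 0) ++ [Sum.inr 1]))

def encB (b : Blk) : SForm ℕ := wrap b.p (core b.κ b.j)

def form (c : Symb ℕ) (bs : List Blk) : SForm ℕ := c :: bs.flatMap encB

theorem split_nt (L X u v : SForm ℕ) (A : ℕ) (hL : ∀ a, Sum.inl a ∉ L)
    (h : L ++ X = u ++ Sum.inl A :: v) : ∃ u', u = L ++ u' ∧ X = u' ++ Sum.inl A :: v := by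
  induction L generalizing u with
  | nil => exact ⟨u, rfl, h⟩
  | cons l L ih =>
    cases u with
    | nil =>
      simp at h
      exact absurd (by simp [h.1]) (hL A)
    | cons w u =>
      simp at h
      obtain ⟨u', h1, h2⟩ := ih u (fun a ha => hL a (by simp [ha])) h.2
      exact ⟨u', by simp [h1, h.1], h2⟩

theorem core_cases (κ : Kd) (j : ℕ) :
    (∃ N, ntOf κ j = some N ∧ core κ j = [Sum.inl N]) ∨ (ntOf κ j = none ∧ κ = .Dn) := by
  cases κ <;> simp [ntOf, core]

theorem enc_split (bs : List Blk) (u v : SForm ℕ) (A : ℕ)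
    (h : bs.flatMap encB = u ++ Sum.inl A :: v) :
    ∃ bs1 b bs2, bs = bs1 ++ b :: bs2 ∧ ntOf b.κ b.j = some A ∧
      ∀ z, u ++ z ++ v = bs1.flatMap encB ++ wrap b.p z ++ bs2.flatMap encB := by
  induction bs generalizing u with
  | nil => simp at h
  | cons b bs ih =>
    rw [List.flatMap_cons, encB, wrap, List.append_assoc] at h
    obtain ⟨u1, h1, h2⟩ := split_nt _ _ _ _ _ (by simp) h
    rcases core_cases b.κ b.j with ⟨N, hN, hc⟩ | ⟨hN, hc⟩
    · rw [hc] at h2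
      cases u1 with
      | nil =>
        simp at h2
        refine ⟨[], b, bs, rfl, ?_, ?_⟩
        · rw [hN, h2.1]
        · intro z
          simp [h1, ← h2.2, wrap]
      | cons w u1 =>
        simp only [List.append_assoc, List.cons_append, List.nil_append, List.cons.injEq] at h2
        obtain ⟨u2, h3, h4⟩ := split_nt (List.replicate b.p (Sum.inr 0)) _ _ _ _ (by simp) h2.2
        obtain ⟨u3, h5, h6⟩ := split_nt [Sum.inr 1] (bs.flatMap encB) _ _ _ (by simp) (by simpa using h4)
        obtain ⟨bs1, b', bs2, e1, e2, e3⟩ := ih u3 (by simpa using h6)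
        refine ⟨b :: bs1, b', bs2, by simp [e1], e2, ?_⟩
        intro z
        have := e3 z
        simp only [List.append_assoc] at this
        simp [h1, h3, h5, ← h2.1, encB, wrap, hc, this]
    · rw [hc] at h2
      obtain ⟨u2, h3, h4⟩ := split_nt (core .Dn b.j ++ List.replicate b.p (Sum.inr 0) ++ [Sum.inr 1])
        (bs.flatMap encB) _ _ _ (by simp [core]) (by simpa using h2)
      obtain ⟨bs1, b', bs2, e1, e2, e3⟩ := ih u2 h4
      refine ⟨b :: bs1, b', bs2, by simp [e1], e2, ?_⟩
      intro z
      have := e3 z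
      simp only [List.append_assoc] at this
      simp [h1, h3, encB, wrap, hc, this]

theorem step_inv (P : List (Rule ℕ)) (c : Symb ℕ) (bs : List Blk) (y : SForm ℕ)
    (h : RStep P (form c bs) y) :
    (∃ r ∈ P, c = Sum.inl r.1 ∧ y = r.2 ++ bs.flatMap encB) ∨
    (∃ r ∈ P, ∃ bs1 b bs2, bs = bs1 ++ b :: bs2 ∧ ntOf b.κ b.j = some r.1 ∧
      y = c :: (bs1.flatMap encB ++ wrap b.p r.2 ++ bs2.flatMap encB)) := by
  obtain ⟨r, hr, u, v, h1, h2⟩ := h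
  cases u with
  | nil =>
    simp [form] at h1
    exact Or.inl ⟨r, hr, h1.1, by simp [h2, h1.2]⟩
  | cons w u =>
    simp only [form, List.cons_append, List.cons.injEq] at h1
    obtain ⟨bs1, b, bs2, e1, e2, e3⟩ := enc_split _ _ _ _ h1.2
    refine Or.inr ⟨r, hr, bs1, b, bs2, e1, e2, ?_⟩
    rw [h2, ← e3 r.2, h1.1]; simp

theorem step_ctrl (P : List (Rule ℕ)) (r : Rule ℕ) (hr : r ∈ P) (c' : Symb ℕ) (h : r.2 = [c'])
    (bs : List Blk) : RStep P (form (Sum.inl r.1) bs) (form c' bs) :=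
  ⟨r, hr, [], bs.flatMap encB, by simp [form], by simp [form, h]⟩

theorem step_blk (P : List (Rule ℕ)) (r : Rule ℕ) (hr : r ∈ P) (c : Symb ℕ)
    (bs1 : List Blk) (b b' : Blk) (bs2 : List Blk) (hb : ntOf b.κ b.j = some r.1)
    (hw : wrap b.p r.2 = encB b') :
    RStep P (form c (bs1 ++ b :: bs2)) (form c (bs1 ++ b' :: bs2)) := by
  refine ⟨r, hr, c :: (bs1.flatMap encB ++ List.replicate b.p (Sum.inr 0)),
    List.replicate b.p (Sum.inr 0) ++ [Sum.inr 1] ++ bs2.flatMap encB, ?_, ?_⟩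
  · rcases core_cases b.κ b.j with ⟨N, hN, hc⟩ | ⟨hN, hc⟩
    · rw [hN] at hb; cases hb
      simp [form, encB, wrap, hc]
    · rw [hN] at hb; cases hb
  · simp [form, ← hw, wrap]

inductive St where
  | cyc (s : ℕ) (h : ℤ)
  | F (m : ℕ) (h : ℤ)
  | E (m : ℕ) (h : ℤ)

def sC (n s : ℕ) : Symb ℕ := Sum.inl (if s = 2 * n then 1 else 6 * s + 1)
def sF (n m : ℕ) : Symb ℕ := if m = n then Sum.inr 1 else Sum.inl (6 * m + 2)

def sym (n : ℕ) : St → Symb ℕ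
  | .cyc s _ => sC n s
  | .F m _ => sF n m
  | .E m _ => Sum.inl (6 * m + 3)

def ok (n : ℕ) : St → Blk → Prop
  | .cyc s h, b => (s ≤ b.j ∧ b.κ = .B ∧ (b.p : ℤ) = h) ∨
      (b.j < s ∧ s ≤ b.j + n ∧ (b.κ = .A ∨ b.κ = .T) ∧ (b.p : ℤ) = h) ∨
      (b.j + n < s ∧ b.κ = .B ∧ (b.p : ℤ) = h + 1)
  | .F m h, b => (b.p : ℤ) = h ∧ ((b.j < m ∧ b.κ = .Dn) ∨ (m ≤ b.j ∧ b.κ = .B))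
  | .E m h, b => (b.p : ℤ) = h ∧ ((b.j + 1 < m ∧ b.κ = .Dn) ∨
      (b.j + 1 = m ∧ (b.κ = .A ∨ b.κ = .T)) ∨ (m ≤ b.j ∧ b.κ = .B))

def Good (n N : ℕ) (σ : St) (x : SForm ℕ) : Prop :=
  ∃ bs : List Blk, bs.length = N ∧ (∀ b ∈ bs, b.j < n ∧ ok n σ b) ∧ x = form (sym n σ) bs

theorem steps_inv (P : List (Rule ℕ)) (I : SForm ℕ → Prop)
    (hI : ∀ x y, I x → RStep P x y → I y) (m : ℕ) (x y : SForm ℕ) (hx : I x)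
    (h : StepsN P m x y) : I y := by
  induction m generalizing x with
  | zero => cases h; exact hx
  | succ m ih =>
    obtain ⟨z, h1, h2⟩ := h
    exact ih z (hI _ _ hx h1) h2

structure Trans (n : ℕ) (P : List (Rule ℕ)) (σ σ' : St) : Prop where
  hc : ∀ r ∈ P, sym n σ = Sum.inl r.1 → r.2 = [sym n σ']
  hc0 : ∃ r ∈ P, sym n σ = Sum.inl r.1
  hc' : ∀ r ∈ P, sym n σ' ≠ Sum.inl r.1
  hb : ∀ b : Blk, b.j < n → (ok n σ b ∨ ok n σ' b) → ∀ r ∈ P, ntOf b.κ b.j = some r.1 →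
    ∃ b' : Blk, b'.j < n ∧ (ok n σ b' ∨ ok n σ' b') ∧ wrap b.p r.2 = encB b'
  hbt : ∀ b : Blk, b.j < n → (ok n σ b ∨ ok n σ' b) →
    (∀ r ∈ P, ntOf b.κ b.j ≠ some r.1) → ok n σ' b

theorem exists_step_blk (P : List (Rule ℕ)) (c : Symb ℕ) (bs : List Blk) (b : Blk) (hb : b ∈ bs)
    (r : Rule ℕ) (hr : r ∈ P) (h : ntOf b.κ b.j = some r.1) : ∃ z, RStep P (form c bs) z := by
  obtain ⟨bs1, bs2, rfl⟩ := List.append_of_mem hb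
  rcases core_cases b.κ b.j with ⟨N, hN, hc⟩ | ⟨hN, hc⟩
  · rw [hN] at h; cases h
    exact ⟨_, r, hr, c :: (bs1.flatMap encB ++ List.replicate b.p (Sum.inr 0)),
      List.replicate b.p (Sum.inr 0) ++ [Sum.inr 1] ++ bs2.flatMap encB, by
        simp [form, encB, wrap, hc], rfl⟩
  · rw [hN] at h; cases h

theorem exists_step_ctrl (P : List (Rule ℕ)) (c : Symb ℕ) (bs : List Blk)
    (r : Rule ℕ) (hr : r ∈ P) (h : c = Sum.inl r.1) : ∃ z, RStep P (form c bs) z :=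
  ⟨_, r, hr, [], bs.flatMap encB, by simp [form, h], rfl⟩

theorem Trans.run {n N : ℕ} {P : List (Rule ℕ)} {σ σ' : St} (T : Trans n P σ σ') (m : ℕ)
    (x y : SForm ℕ) (hx : Good n N σ x ∨ Good n N σ' x) (h : StepsN P m x y)
    (ht : ¬ ∃ z, RStep P y z) : Good n N σ' y := by
  have key := steps_inv P (fun x => ∃ c bs, (c = sym n σ ∨ c = sym n σ') ∧ bs.length = N ∧
    (∀ b ∈ bs, b.j < n ∧ (ok n σ b ∨ ok n σ' b)) ∧ x = form c bs) ?_ m x y ?_ h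
  · obtain ⟨c, bs, hc, hl, hb, rfl⟩ := key
    refine ⟨bs, hl, ?_, ?_⟩
    · intro b hbm
      refine ⟨(hb b hbm).1, T.hbt b (hb b hbm).1 (hb b hbm).2 ?_⟩
      intro r hr h
      exact ht (exists_step_blk P c bs b hbm r hr h)
    · rcases hc with rfl | rfl
      · obtain ⟨r, hr, h⟩ := T.hc0
        exact absurd (exists_step_ctrl P _ bs r hr h) ht
      · rfl
  · rintro x y ⟨c, bs, hc, hl, hb, rfl⟩ hs
    rcases step_inv P c bs y hs with ⟨r, hr, h1, rfl⟩ | ⟨r, hr, bs1, b, bs2, rfl, h1, rfl⟩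
    · rcases hc with rfl | rfl
      · exact ⟨sym n σ', bs, Or.inr rfl, hl, hb, by rw [T.hc r hr h1]; rfl⟩
      · exact absurd h1 (T.hc' r hr)
    · have hbb := hb b (by simp)
      obtain ⟨b', h2, h3, h4⟩ := T.hb b hbb.1 hbb.2 r hr h1
      refine ⟨c, bs1 ++ b' :: bs2, hc, by simpa using hl, ?_, by simp [form, h4]⟩
      intro b'' hm
      simp only [List.mem_append, List.mem_cons] at hm
      rcases hm with hm | rfl | hm
      · exact hb b'' (by simp [hm])
      · exact ⟨h2, h3⟩
      · exact hb b'' (by simp [hm])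
  · rcases hx with ⟨bs, hl, hb, rfl⟩ | ⟨bs, hl, hb, rfl⟩
    · exact ⟨_, bs, Or.inl rfl, hl, fun b hm => ⟨(hb b hm).1, Or.inl (hb b hm).2⟩, rfl⟩
    · exact ⟨_, bs, Or.inr rfl, hl, fun b hm => ⟨(hb b hm).1, Or.inr (hb b hm).2⟩, rfl⟩

theorem trap_run (P : List (Rule ℕ)) (a : ℕ) (h0 : (a, [Sum.inl a]) ∈ P)
    (h1 : ∀ r ∈ P, r.1 = a → r.2 = [Sum.inl a]) (m : ℕ) (X y : SForm ℕ)
    (h : StepsN P m (Sum.inl a :: X) y) (ht : ¬ ∃ z, RStep P y z) : False := by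
  have key := steps_inv P (fun x => ∃ X, x = Sum.inl a :: X) ?_ m _ y ⟨X, rfl⟩ h
  · obtain ⟨X, rfl⟩ := key
    exact ht ⟨_, _, h0, [], X, rfl, rfl⟩
  · rintro x y ⟨X, rfl⟩ ⟨r, hr, u, v, e1, e2⟩
    cases u with
    | nil =>
      simp at e1
      exact ⟨v, by rw [e2, h1 r hr e1.1.symm]; rfl⟩
    | cons w u =>
      simp at e1
      exact ⟨u ++ r.2 ++ v, by rw [e2, ← e1.1]; simp⟩

theorem inactive_run (P : List (Rule ℕ)) (m : ℕ) (x y : SForm ℕ) (h0 : ¬ ∃ z, RStep P x z)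
    (h : StepsN P m x y) : y = x := by
  cases m with
  | zero => exact h.symm
  | succ m => obtain ⟨z, h1, _⟩ := h; exact absurd ⟨z, h1⟩ h0

/-- initial blocks -/
def blocks (n k : ℕ) (g : ℕ → Blk) : List Blk :=
  (List.range n).flatMap (fun j => List.replicate k (g j))

def compP (n k c : ℕ) : List (Rule ℕ) :=
  [(6 * c + 1, [sC n (c + 1)]), (6 * c + 2, [Sum.inl (6 * (c + 1) + 3)])] ++
  (((List.range (2 * n)).filter (fun s => s ≠ c ∧ s ≠ c + 1 ∧ ¬ (s = 0 ∧ c + 1 = 2 * n))).map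
    (fun s => (6 * s + 1, [Sum.inl (6 * s + 1)]))) ++
  (((List.range n).filter (fun s => s ≠ c)).map (fun s => (6 * s + 2, [Sum.inl (6 * s + 2)]))) ++
  (((List.range (n + 1)).filter (fun s => s ≠ c + 1)).map
    (fun s => (6 * s + 3, [Sum.inl (6 * s + 3)]))) ++
  (if c < n then
    [(6 * c + 5, [Sum.inl (6 * c + 4)]), (6 * c + 5, [Sum.inl (6 * c + 6)])]
  else
    [(6 * (c - n) + 4, [Sum.inr 0, Sum.inl (6 * (c - n) + 5), Sum.inr 0]),
     (6 * (c - n) + 6, [Sum.inl (6 * (c - n) + 6)])]) ++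
  (if c + 1 = 2 * n then [(0, form (sC n 0) (blocks n k (fun j => ⟨.B, j, 0⟩)))] else [])

def compR (n : ℕ) : List (Rule ℕ) :=
  [(1, [sF n 0])] ++
  ((List.range (n + 1)).map (fun m => (6 * m + 3, [sF n m]))) ++
  (((List.range (2 * n)).filter (fun s => s ≠ 0)).map
    (fun s => (6 * s + 1, [Sum.inl (6 * s + 1)]))) ++
  ((List.range n).map (fun j => (6 * j + 6, [Sum.inr 0, Sum.inr 1, Sum.inr 0]))) ++
  ((List.range n).map (fun j => (6 * j + 4, [Sum.inl (6 * j + 4)])))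

def comp (n k c : ℕ) : List (Rule ℕ) := if c < 2 * n then compP n k c else compR n

def GG (n k : ℕ) : CDGS ℕ where
  deg := 2 * n + 1
  start := 0
  comp := fun i => comp n k i

theorem mem_compP (n k c : ℕ) (r : Rule ℕ) : r ∈ compP n k c ↔
    (r = (6 * c + 1, [sC n (c + 1)]) ∨ r = (6 * c + 2, [Sum.inl (6 * (c + 1) + 3)]) ∨
    (∃ s, s < 2 * n ∧ s ≠ c ∧ s ≠ c + 1 ∧ ¬ (s = 0 ∧ c + 1 = 2 * n) ∧
      r = (6 * s + 1, [Sum.inl (6 * s + 1)])) ∨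
    (∃ s, s < n ∧ s ≠ c ∧ r = (6 * s + 2, [Sum.inl (6 * s + 2)])) ∨
    (∃ s, s < n + 1 ∧ s ≠ c + 1 ∧ r = (6 * s + 3, [Sum.inl (6 * s + 3)])) ∨
    (c < n ∧ r = (6 * c + 5, [Sum.inl (6 * c + 4)])) ∨
    (c < n ∧ r = (6 * c + 5, [Sum.inl (6 * c + 6)])) ∨
    (¬ c < n ∧ r = (6 * (c - n) + 4, [Sum.inr 0, Sum.inl (6 * (c - n) + 5), Sum.inr 0])) ∨
    (¬ c < n ∧ r = (6 * (c - n) + 6, [Sum.inl (6 * (c - n) + 6)])) ∨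
    (c + 1 = 2 * n ∧ r = (0, form (sC n 0) (blocks n k (fun j => ⟨.B, j, 0⟩))))) := by
  unfold compP
  constructor
  · intro h
    simp only [List.mem_append, List.mem_cons, List.mem_map, List.mem_filter, List.mem_range,
      List.not_mem_nil, or_false, decide_eq_true_eq] at h
    rcases h with (((((h | h) | ⟨s, h, rfl⟩) | ⟨s, h, rfl⟩) | ⟨s, h, rfl⟩) | h) | h
    · simp [h]
    · simp [h]
    · exact Or.inr (Or.inr (Or.inl ⟨s, h.1, h.2.1, h.2.2.1, h.2.2.2, rfl⟩))
    · exact Or.inr (Or.inr (Or.inr (Or.inl ⟨s, h.1, h.2, rfl⟩)))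
    · exact Or.inr (Or.inr (Or.inr (Or.inr (Or.inl ⟨s, h.1, h.2, rfl⟩))))
    · iterate 5 right
      split_ifs at h with hc
      · simp at h; tauto
      · simp at h; tauto
    · iterate 9 right
      split_ifs at h with hc
      · simp at h; exact ⟨hc, h⟩
      · simp at h
  · intro h
    simp only [List.mem_append, List.mem_cons, List.mem_map, List.mem_filter, List.mem_range,
      List.not_mem_nil, or_false, decide_eq_true_eq]
    rcases h with h | h | ⟨s, h1, h2, h3, h4, rfl⟩ | ⟨s, h1, h2, rfl⟩ | ⟨s, h1, h2, rfl⟩ |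
      ⟨h1, h⟩ | ⟨h1, h⟩ | ⟨h1, h⟩ | ⟨h1, h⟩ | ⟨h1, h⟩
    · simp [h]
    · simp [h]
    · exact Or.inl (Or.inl (Or.inl (Or.inl (Or.inr ⟨s, ⟨h1, h2, h3, h4⟩, rfl⟩))))
    · exact Or.inl (Or.inl (Or.inl (Or.inr ⟨s, ⟨h1, h2⟩, rfl⟩)))
    · exact Or.inl (Or.inl (Or.inr ⟨s, ⟨h1, h2⟩, rfl⟩))
    all_goals first
      | (left; right; simp [h1, h]; done)
      | (right; simp [h1, h])

theorem mem_compR (n : ℕ) (r : Rule ℕ) : r ∈ compR n ↔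
    (r = (1, [sF n 0]) ∨ (∃ m, m < n + 1 ∧ r = (6 * m + 3, [sF n m])) ∨
    (∃ s, s < 2 * n ∧ s ≠ 0 ∧ r = (6 * s + 1, [Sum.inl (6 * s + 1)])) ∨
    (∃ j, j < n ∧ r = (6 * j + 6, [Sum.inr 0, Sum.inr 1, Sum.inr 0])) ∨
    (∃ j, j < n ∧ r = (6 * j + 4, [Sum.inl (6 * j + 4)]))) := by
  unfold compR
  simp only [List.mem_append, List.mem_cons, List.mem_map, List.mem_filter, List.mem_range,
      List.not_mem_nil, or_false, decide_eq_true_eq, eq_comm (a := r), or_assoc, and_assoc]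

theorem nt_cases {κ : Kd} {j A : ℕ} (h : ntOf κ j = some A) :
    (κ = .A ∧ A = 6 * j + 4) ∨ (κ = .B ∧ A = 6 * j + 5) ∨ (κ = .T ∧ A = 6 * j + 6) := by
  cases κ <;> simp [ntOf] at h <;> simp [h]

theorem wrap_core (κ : Kd) (j p : ℕ) : wrap p (core κ j) = encB ⟨κ, j, p⟩ := rfl

theorem wrap_grow (j p : ℕ) :
    wrap p [Sum.inr 0, Sum.inl (6 * j + 5), Sum.inr 0] = encB ⟨.B, j, p + 1⟩ := by
  simp only [encB, wrap, core]
  rw [List.replicate_succ' ]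
  conv_rhs => rw [show List.replicate p (Sum.inr 0 : Symb ℕ) ++ [Sum.inr 0] =
    Sum.inr 0 :: List.replicate p (Sum.inr 0) by
      rw [← List.replicate_succ', List.replicate_succ]]
  have : ∀ X : SForm ℕ, List.replicate p (Sum.inr 0 : Symb ℕ) ++ Sum.inr 0 :: X =
    Sum.inr 0 :: (List.replicate p (Sum.inr 0) ++ X) := by
      intro X
      rw [← List.cons_append, ← List.replicate_succ, List.replicate_succ']; simp
  simp [this]

/-- the block behaviour of `compP` -/
theorem compP_blk {n k c : ℕ} (b : Blk) (r : Rule ℕ) (hr : r ∈ compP n k c)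
    (h : ntOf b.κ b.j = some r.1) :
    (c < n ∧ b.j = c ∧ b.κ = .B ∧ (wrap b.p r.2 = encB ⟨.A, b.j, b.p⟩ ∨
      wrap b.p r.2 = encB ⟨.T, b.j, b.p⟩)) ∨
    (n ≤ c ∧ b.j + n = c ∧ b.κ = .A ∧ wrap b.p r.2 = encB ⟨.B, b.j, b.p + 1⟩) ∨
    (n ≤ c ∧ b.j + n = c ∧ b.κ = .T ∧ wrap b.p r.2 = encB ⟨.T, b.j, b.p⟩) := by
  have h0 := nt_cases h
  rw [mem_compP] at hr
  rcases hr with rfl | rfl | ⟨s, h1, h2, h3, h4, rfl⟩ | ⟨s, h1, h2, rfl⟩ | ⟨s, h1, h2, rfl⟩ |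
      ⟨h1, rfl⟩ | ⟨h1, rfl⟩ | ⟨h1, rfl⟩ | ⟨h1, rfl⟩ | ⟨h1, rfl⟩
  iterate 5 exfalso; simp only at h0; omega
  · left
    have : b.κ = .B ∧ b.j = c := by
      rcases h0 with ⟨a, e⟩ | ⟨a, e⟩ | ⟨a, e⟩ <;> simp only at e
      · omega
      · exact ⟨a, by omega⟩
      · omega
    refine ⟨h1, this.2, this.1, Or.inl ?_⟩
    rw [this.2]; rfl
  · left
    have : b.κ = .B ∧ b.j = c := by
      rcases h0 with ⟨a, e⟩ | ⟨a, e⟩ | ⟨a, e⟩ <;> simp only at e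
      · omega
      · exact ⟨a, by omega⟩
      · omega
    refine ⟨h1, this.2, this.1, Or.inr ?_⟩
    rw [this.2]; rfl
  · right; left
    have : b.κ = .A ∧ b.j = c - n := by
      rcases h0 with ⟨a, e⟩ | ⟨a, e⟩ | ⟨a, e⟩ <;> simp only at e
      · exact ⟨a, by omega⟩
      · omega
      · omega
    refine ⟨by omega, by omega, this.1, ?_⟩
    rw [this.2]; exact wrap_grow _ _
  · right; right
    have : b.κ = .T ∧ b.j = c - n := by
      rcases h0 with ⟨a, e⟩ | ⟨a, e⟩ | ⟨a, e⟩ <;> simp only at e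
      · omega
      · omega
      · exact ⟨a, by omega⟩
    refine ⟨by omega, by omega, this.1, ?_⟩
    rw [this.2]; rfl
  · exfalso; simp only at h0; omega

theorem compP_blk' {n k c : ℕ} (b : Blk) (h : ∀ r ∈ compP n k c, ntOf b.κ b.j ≠ some r.1) :
    (c < n → b.j = c → b.κ ≠ .B) ∧ (n ≤ c → b.j + n = c → b.κ ≠ .A ∧ b.κ ≠ .T) := by
  refine ⟨fun h1 h2 h3 => ?_, fun h1 h2 => ⟨fun h3 => ?_, fun h3 => ?_⟩⟩
  · refine h (6 * c + 5, [Sum.inl (6 * c + 4)]) ?_ ?_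
    · rw [mem_compP]; simp [h1]
    · simp [h3, ntOf, h2]
  · refine h (6 * (c - n) + 4, [Sum.inr 0, Sum.inl (6 * (c - n) + 5), Sum.inr 0]) ?_ ?_
    · rw [mem_compP]; simp [h1]
    · simp [h3, ntOf]; omega
  · refine h (6 * (c - n) + 6, [Sum.inl (6 * (c - n) + 6)]) ?_ ?_
    · rw [mem_compP]; simp [h1]
    · simp [h3, ntOf]; omega

theorem compR_blk {n : ℕ} (b : Blk) (r : Rule ℕ) (hr : r ∈ compR n)
    (h : ntOf b.κ b.j = some r.1) :
    (b.κ = .T ∧ wrap b.p r.2 = encB ⟨.Dn, b.j, b.p⟩) ∨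
    (b.κ = .A ∧ wrap b.p r.2 = encB ⟨.A, b.j, b.p⟩) := by
  have h0 := nt_cases h
  rw [mem_compR] at hr
  rcases hr with rfl | ⟨s, h1, rfl⟩ | ⟨s, h1, h2, rfl⟩ | ⟨s, h1, rfl⟩ | ⟨s, h1, rfl⟩
  iterate 3 exfalso; simp only at h0; omega
  · left
    rcases h0 with ⟨a, e⟩ | ⟨a, e⟩ | ⟨a, e⟩ <;> simp only at e
    · omega
    · omega
    · exact ⟨a, rfl⟩
  · right
    rcases h0 with ⟨a, e⟩ | ⟨a, e⟩ | ⟨a, e⟩ <;> simp only at e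
    · obtain rfl : s = b.j := by omega
      exact ⟨a, rfl⟩
    · omega
    · omega

theorem compR_blk' {n : ℕ} (b : Blk) (hj : b.j < n) (h : ∀ r ∈ compR n, ntOf b.κ b.j ≠ some r.1) :
    b.κ ≠ .A ∧ b.κ ≠ .T := by
  refine ⟨fun h3 => ?_, fun h3 => ?_⟩
  · refine h (6 * b.j + 4, [Sum.inl (6 * b.j + 4)]) ?_ ?_
    · rw [mem_compR]; simp [hj]
    · simp [h3, ntOf]
  · refine h (6 * b.j + 6, [Sum.inr 0, Sum.inr 1, Sum.inr 0]) ?_ ?_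
    · rw [mem_compR]; simp [hj]
    · simp [h3, ntOf]

theorem compP_ctrl {n k c : ℕ} (r : Rule ℕ) (hr : r ∈ compP n k c) :
    (∀ s, r.1 = 6 * s + 1 → (s = c ∧ r.2 = [sC n (c + 1)]) ∨
      (s ≠ c ∧ s ≠ c + 1 ∧ ¬ (s = 0 ∧ c + 1 = 2 * n) ∧ r.2 = [Sum.inl (6 * s + 1)])) ∧
    (∀ s, r.1 = 6 * s + 2 → (s = c ∧ r.2 = [Sum.inl (6 * (c + 1) + 3)]) ∨
      (s ≠ c ∧ r.2 = [Sum.inl (6 * s + 2)])) ∧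
    (∀ s, r.1 = 6 * s + 3 → (s ≠ c + 1 ∧ r.2 = [Sum.inl (6 * s + 3)])) := by
  rw [mem_compP] at hr
  rcases hr with rfl | rfl | ⟨s, h1, h2, h3, h4, rfl⟩ | ⟨s, h1, h2, rfl⟩ | ⟨s, h1, h2, rfl⟩ |
      ⟨h1, rfl⟩ | ⟨h1, rfl⟩ | ⟨h1, rfl⟩ | ⟨h1, rfl⟩ | ⟨h1, rfl⟩ <;>
  refine ⟨fun t e => ?_, fun t e => ?_, fun t e => ?_⟩ <;> simp only at e <;>
  first
    | omega
    | (obtain rfl : t = c := by omega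
       exact Or.inl ⟨rfl, rfl⟩)
    | (obtain rfl : t = s := by omega
       first
       | exact Or.inr ⟨h2, h3, h4, rfl⟩
       | exact Or.inr ⟨h2, rfl⟩
       | exact ⟨h2, rfl⟩)

theorem compR_ctrl {n : ℕ} (r : Rule ℕ) (hr : r ∈ compR n) :
    (∀ s, r.1 = 6 * s + 1 → (s = 0 ∧ r.2 = [sF n 0]) ∨
      (s ≠ 0 ∧ r.2 = [Sum.inl (6 * s + 1)])) ∧
    (∀ s, r.1 ≠ 6 * s + 2) ∧
    (∀ s, r.1 = 6 * s + 3 → r.2 = [sF n s]) := by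
  rw [mem_compR] at hr
  rcases hr with rfl | ⟨s, h1, rfl⟩ | ⟨s, h1, h2, rfl⟩ | ⟨s, h1, rfl⟩ | ⟨s, h1, rfl⟩ <;>
  refine ⟨fun t e => ?_, fun t e => ?_, fun t e => ?_⟩ <;> simp only at e <;>
  first
    | omega
    | (obtain rfl : t = 0 := by omega
       exact Or.inl ⟨rfl, rfl⟩)
    | (obtain rfl : t = s := by omega
       first
       | exact Or.inr ⟨h2, rfl⟩
       | rfl)

theorem trans_cyc (n k c : ℕ) (hc : c < 2 * n) (h : ℤ) :
    Trans n (compP n k c) (.cyc c h) (.cyc (c + 1) h) := by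
  have e1 : sym n (.cyc c h) = Sum.inl (6 * c + 1) := by
    simp [sym, sC]; omega
  constructor
  · intro r hr he
    rw [e1] at he
    rcases (compP_ctrl r hr).1 c (by simpa using he.symm) with h | h
    · exact h.2
    · exact absurd rfl h.1
  · exact ⟨(6 * c + 1, [sC n (c + 1)]), by rw [mem_compP]; simp, e1⟩
  · intro r hr he
    simp only [sym, sC, Sum.inl.injEq] at he
    split_ifs at he with h1
    · rcases (compP_ctrl r hr).1 0 (by simpa using he.symm) with h | h
      · omega
      · omega
    · rcases (compP_ctrl r hr).1 (c + 1) (by simpa using he.symm) with h | h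
      · omega
      · omega
  · intro b hj hok r hr he
    rcases compP_blk b r hr he with ⟨a1, a2, a3, a4⟩ | ⟨a1, a2, a3, a4⟩ | ⟨a1, a2, a3, a4⟩
    · rcases a4 with a4 | a4
      · refine ⟨_, ?_, ?_, a4⟩
        · exact hj
        · simp [ok, a3] at hok ⊢; omega
      · refine ⟨_, ?_, ?_, a4⟩
        · exact hj
        · simp [ok, a3] at hok ⊢; omega
    · refine ⟨_, ?_, ?_, a4⟩
      · exact hj
      · simp [ok, a3] at hok ⊢; omega
    · refine ⟨_, ?_, ?_, a4⟩
      · exact hj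
      · simp [ok, a3] at hok ⊢; omega
  · intro b hj hok ht
    have := compP_blk' b ht
    rcases b with ⟨κ, j, p⟩
    change j < n at hj
    cases κ <;> simp [ok] at hok this ⊢ <;> omega

theorem trans_F (n k c : ℕ) (hc : c < n) (h : ℤ) :
    Trans n (compP n k c) (.F c h) (.E (c + 1) h) := by
  have e1 : sym n (.F c h) = Sum.inl (6 * c + 2) := by
    simp [sym, sF]; omega
  constructor
  · intro r hr he
    rw [e1] at he
    rcases (compP_ctrl r hr).2.1 c (by simpa using he.symm) with h | h
    · exact h.2
    · exact absurd rfl h.1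
  · exact ⟨(6 * c + 2, [Sum.inl (6 * (c + 1) + 3)]), by rw [mem_compP]; simp, e1⟩
  · intro r hr he
    simp only [sym, Sum.inl.injEq] at he
    exact ((compP_ctrl r hr).2.2 (c + 1) he.symm).1 rfl
  · intro b hj hok r hr he
    rcases compP_blk b r hr he with ⟨a1, a2, a3, a4⟩ | ⟨a1, a2, a3, a4⟩ | ⟨a1, a2, a3, a4⟩
    · rcases a4 with a4 | a4
      · refine ⟨_, ?_, ?_, a4⟩
        · exact hj
        · simp [ok, a3] at hok ⊢; omega
      · refine ⟨_, ?_, ?_, a4⟩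
        · exact hj
        · simp [ok, a3] at hok ⊢; omega
    · omega
    · omega
  · intro b hj hok ht
    have := compP_blk' b ht
    rcases b with ⟨κ, j, p⟩
    cases κ <;> simp [ok] at hok this ⊢ <;> omega

theorem sF_ne {n : ℕ} (m : ℕ) (r : Rule ℕ) (hr : r ∈ compR n) : sF n m ≠ Sum.inl r.1 := by
  intro he
  simp only [sF] at he
  split_ifs at he with h1
  exact (compR_ctrl r hr).2.1 m (by simpa using he.symm)

theorem trans_R0 (n : ℕ) (h : ℤ) : Trans n (compR n) (.cyc 0 h) (.F 0 h) := by
  have e1 : sym n (.cyc 0 h) = Sum.inl 1 := by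
    simp [sym, sC]
  constructor
  · intro r hr he
    rw [e1] at he
    rcases (compR_ctrl r hr).1 0 (by simpa using he.symm) with h | h
    · exact h.2
    · exact absurd rfl h.1
  · exact ⟨(1, [sF n 0]), by rw [mem_compR]; simp, e1⟩
  · intro r hr he
    exact sF_ne 0 r hr he
  · intro b hj hok r hr he
    rcases compR_blk b r hr he with ⟨a3, a4⟩ | ⟨a3, a4⟩
    · refine ⟨_, ?_, ?_, a4⟩
      · exact hj
      · simp [ok, a3] at hok
    · refine ⟨_, ?_, ?_, a4⟩
      · exact hj
      · simp [ok, a3] at hok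
  · intro b hj hok ht
    rcases b with ⟨κ, j, p⟩
    cases κ <;> simp [ok] at hok ⊢ <;> omega

theorem trans_RE (n m : ℕ) (hm : m ≤ n) (h : ℤ) : Trans n (compR n) (.E m h) (.F m h) := by
  constructor
  · intro r hr he
    simp only [sym, Sum.inl.injEq] at he
    exact (compR_ctrl r hr).2.2 m he.symm
  · exact ⟨(6 * m + 3, [sF n m]), by rw [mem_compR]; simp; omega, rfl⟩
  · intro r hr he
    exact sF_ne m r hr he
  · intro b hj hok r hr he
    rcases compR_blk b r hr he with ⟨a3, a4⟩ | ⟨a3, a4⟩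
    · refine ⟨_, ?_, ?_, a4⟩
      · exact hj
      · simp [ok, a3] at hok ⊢; omega
    · refine ⟨_, ?_, ?_, a4⟩
      · exact hj
      · simp [ok, a3] at hok ⊢; omega
  · intro b hj hok ht
    have := compR_blk' b hj ht
    rcases b with ⟨κ, j, p⟩
    cases κ <;> simp [ok] at hok this ⊢ <;> omega

def Valid (n : ℕ) : St → Prop
  | .cyc s _ => s < 2 * n
  | .F m _ => m ≤ n
  | .E m _ => 1 ≤ m ∧ m ≤ n

def Inv (n N : ℕ) (x : SForm ℕ) : Prop := x = [Sum.inl 0] ∨ ∃ σ, Valid n σ ∧ Good n N σ x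

theorem good_wrap (n N : ℕ) (h : ℤ) (x : SForm ℕ) :
    Good n N (.cyc (2 * n) h) x ↔ Good n N (.cyc 0 (h + 1)) x := by
  unfold Good
  have e : sym n (.cyc (2 * n) h) = sym n (.cyc 0 (h + 1)) := by simp [sym, sC]
  rw [e]
  have : ∀ b : Blk, (b.j < n ∧ ok n (.cyc (2 * n) h) b) ↔ (b.j < n ∧ ok n (.cyc 0 (h + 1)) b) := by
    intro b
    constructor
    · rintro ⟨h1, h2⟩
      refine ⟨h1, ?_⟩
      simp only [ok] at h2 ⊢
      rcases h2 with h2 | h2 | h2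
      · omega
      · omega
      · exact Or.inl ⟨by omega, h2.2.1, h2.2.2⟩
    · rintro ⟨h1, h2⟩
      refine ⟨h1, ?_⟩
      simp only [ok] at h2 ⊢
      rcases h2 with h2 | h2 | h2
      · exact Or.inr (Or.inr ⟨by omega, h2.2.1, h2.2.2⟩)
      · omega
      · omega
  simp only [this]

theorem inv_cyc_succ {n N c : ℕ} {h : ℤ} {y : SForm ℕ} (hc : c < 2 * n)
    (hg : Good n N (.cyc (c + 1) h) y) : Inv n N y := by
  by_cases e : c + 1 = 2 * n
  · rw [e, good_wrap] at hg
    exact Or.inr ⟨_, by simp [Valid]; omega, hg⟩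
  · exact Or.inr ⟨_, by simp [Valid]; omega, hg⟩

theorem blocks_length (n k : ℕ) (g : ℕ → Blk) : (blocks n k g).length = n * k := by
  simp [blocks, List.length_flatMap]

theorem mem_blocks (n k : ℕ) (g : ℕ → Blk) (b : Blk) (h : b ∈ blocks n k g) :
    ∃ j < n, b = g j := by
  simp [blocks] at h
  obtain ⟨j, h1, h2⟩ := h
  exact ⟨j, h1, h2.2⟩

theorem Inv_init (n k : ℕ) :
    Good n (n * k) (.cyc 0 0) (form (sC n 0) (blocks n k (fun j => ⟨.B, j, 0⟩))) := by
  refine ⟨_, blocks_length n k _, ?_, rfl⟩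
  intro b hb
  obtain ⟨j, hj, rfl⟩ := mem_blocks _ _ _ _ hb
  exact ⟨hj, by simp [ok]⟩

theorem Good_trap {n N k c : ℕ} {x y : SForm ℕ} {m a : ℕ} {σ : St} (hg : Good n N σ x)
    (hs : sym n σ = Sum.inl a) (h0 : (a, [Sum.inl a]) ∈ comp n k c)
    (h1 : ∀ r ∈ comp n k c, r.1 = a → r.2 = [Sum.inl a])
    (h : StepsN (comp n k c) m x y) (ht : ¬ ∃ z, RStep (comp n k c) y z) : False := by
  obtain ⟨bs, _, _, rfl⟩ := hg
  rw [hs] at h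
  exact trap_run _ a h0 h1 m _ y h ht

theorem no_step_done (n N : ℕ) (P : List (Rule ℕ)) (h : ℤ) (x : SForm ℕ)
    (hg : Good n N (.F n h) x) : ¬ ∃ z, RStep P x z := by
  rintro ⟨z, hz⟩
  obtain ⟨bs, _, hb, rfl⟩ := hg
  rcases step_inv _ _ _ _ hz with ⟨r, hr, h1, _⟩ | ⟨r, hr, bs1, b, bs2, rfl, h1, _⟩
  · simp [sym, sF] at h1
  · have := hb b (by simp)
    simp only [ok] at this
    have h3 : b.κ = .Dn := by
      rcases this.2.2 with h | h
      · exact h.2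
      · omega
    simp [h3, ntOf] at h1

theorem Inv_step (n k c : ℕ) (hn : 1 ≤ n) (m : ℕ) (x y : SForm ℕ)
    (hx : Inv n (n * k) x) (h : StepsN (comp n k c) m x y)
    (ht : ¬ ∃ z, RStep (comp n k c) y z) : Inv n (n * k) y := by
  rcases hx with rfl | ⟨σ, hv, hg⟩
  · -- start
    by_cases hc : c + 1 = 2 * n
    · have e : comp n k c = compP n k c := by simp [comp]; omega
      rw [e] at h ht
      cases m with
      | zero => exact Or.inl h.symm
      | succ m =>
        obtain ⟨z, ⟨r, hr, u, v, h1, h2⟩, h3⟩ := h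
        have h4 : r.1 = 0 ∧ u = [] ∧ v = [] := by
          cases u with
          | nil => simp at h1; exact ⟨h1.1.symm, rfl, h1.2⟩
          | cons w u => simp at h1
        obtain ⟨h4, rfl, rfl⟩ := h4
        have h5 : r.2 = form (sC n 0) (blocks n k (fun j => ⟨.B, j, 0⟩)) := by
          rw [mem_compP] at hr
          rcases hr with rfl | rfl | ⟨s, h1, h2, h3, h4, rfl⟩ | ⟨s, h1, h2, rfl⟩ | ⟨s, h1, h2, rfl⟩ |
            ⟨h1, rfl⟩ | ⟨h1, rfl⟩ | ⟨h1, rfl⟩ | ⟨h1, rfl⟩ | ⟨h1, rfl⟩ <;> simp at h4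
          rfl
        simp [h5] at h2
        subst h2
        have := (trans_cyc n k c (by omega) (-1)).run m _ y (Or.inr (by
          rw [hc, good_wrap]; exact Inv_init n k)) h3 ht
        exact inv_cyc_succ (by omega) this
    · left
      refine inactive_run _ m _ y ?_ h
      rintro ⟨z, r, hr, u, v, h1, h2⟩
      have h4 : r.1 = 0 := by
        cases u with
        | nil => simp at h1; exact h1.1.symm
        | cons w u => simp at h1
      unfold comp at hr
      split_ifs at hr with hcc
      · rw [mem_compP] at hr
        rcases hr with rfl | rfl | ⟨s, h1, h2, h3, h4, rfl⟩ | ⟨s, h1, h2, rfl⟩ | ⟨s, h1, h2, rfl⟩ |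
            ⟨h1, rfl⟩ | ⟨h1, rfl⟩ | ⟨h1, rfl⟩ | ⟨h1, rfl⟩ | ⟨h1, rfl⟩ <;> simp at h4
        omega
      · rw [mem_compR] at hr
        rcases hr with rfl | ⟨s, h1, rfl⟩ | ⟨s, h1, h2, rfl⟩ | ⟨s, h1, rfl⟩ | ⟨s, h1, rfl⟩ <;>
          simp at h4
  · by_cases hc : c < 2 * n
    · have e : comp n k c = compP n k c := by simp [comp]; omega
      cases σ with
      | cyc s i =>
        simp only [Valid] at hv
        by_cases h1 : s = c
        · subst h1
          rw [e] at h ht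
          exact inv_cyc_succ hc ((trans_cyc n k s hc i).run m x y (Or.inl hg) h ht)
        by_cases h2 : s = c + 1
        · subst h2
          rw [e] at h ht
          exact inv_cyc_succ hc ((trans_cyc n k c hc i).run m x y (Or.inr hg) h ht)
        by_cases h3 : s = 0 ∧ c + 1 = 2 * n
        · obtain ⟨rfl, h3⟩ := h3
          rw [e] at h ht
          refine inv_cyc_succ hc ((trans_cyc n k c hc (i - 1)).run m x y (Or.inr ?_) h ht)
          rw [h3, good_wrap]; simpa using hg
        · exfalso
          refine Good_trap (a := 6 * s + 1) hg ?_ ?_ ?_ h ht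
          · simp [sym, sC]; omega
          · rw [e, mem_compP]
            exact Or.inr (Or.inr (Or.inl ⟨s, hv, h1, h2, h3, rfl⟩))
          · rw [e]
            intro r hr hh
            rcases (compP_ctrl r hr).1 s hh with h | h
            · omega
            · exact h.2.2.2
      | F s i =>
        simp only [Valid] at hv
        by_cases h0 : s = n
        · subst h0
          rw [inactive_run _ m x y (no_step_done s _ _ i x hg) h]
          exact Or.inr ⟨.F s i, le_refl s, hg⟩
        by_cases h1 : s = c
        · subst h1
          rw [e] at h ht
          exact Or.inr ⟨_, by simp only [Valid]; omega,
            (trans_F n k s (by omega) i).run m x y (Or.inl hg) h ht⟩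
        · exfalso
          refine Good_trap (a := 6 * s + 2) hg ?_ ?_ ?_ h ht
          · simp [sym, sF]; omega
          · rw [e, mem_compP]
            exact Or.inr (Or.inr (Or.inr (Or.inl ⟨s, by omega, h1, rfl⟩)))
          · rw [e]
            intro r hr hh
            rcases (compP_ctrl r hr).2.1 s hh with h | h
            · omega
            · exact h.2
      | E s i =>
        simp only [Valid] at hv
        by_cases h1 : s = c + 1
        · subst h1
          rw [e] at h ht
          exact Or.inr ⟨_, by simp only [Valid]; omega,
            (trans_F n k c (by omega) i).run m x y (Or.inr hg) h ht⟩
        · exfalso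
          refine Good_trap (a := 6 * s + 3) hg rfl ?_ ?_ h ht
          · rw [e, mem_compP]
            exact Or.inr (Or.inr (Or.inr (Or.inr (Or.inl ⟨s, by omega, h1, rfl⟩))))
          · rw [e]
            intro r hr hh
            exact ((compP_ctrl r hr).2.2 s hh).2
    · have e : comp n k c = compR n := by simp [comp]; omega
      cases σ with
      | cyc s i =>
        simp only [Valid] at hv
        by_cases h1 : s = 0
        · subst h1
          rw [e] at h ht
          exact Or.inr ⟨_, by simp [Valid], (trans_R0 n i).run m x y (Or.inl hg) h ht⟩
        · exfalso
          refine Good_trap (a := 6 * s + 1) hg ?_ ?_ ?_ h ht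
          · simp [sym, sC]; omega
          · rw [e, mem_compR]
            exact Or.inr (Or.inr (Or.inl ⟨s, hv, h1, rfl⟩))
          · rw [e]
            intro r hr hh
            rcases (compR_ctrl r hr).1 s hh with h | h
            · omega
            · exact h.2
      | F s i =>
        simp only [Valid] at hv
        rw [e] at h ht
        by_cases h1 : s = 0
        · subst h1
          exact Or.inr ⟨_, by simp [Valid], (trans_R0 n i).run m x y (Or.inr hg) h ht⟩
        · exact Or.inr ⟨.F s i, by simpa [Valid], (trans_RE n s hv i).run m x y (Or.inr hg) h ht⟩
      | E s i =>
        simp only [Valid] at hv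
        rw [e] at h ht
        exact Or.inr ⟨.F s i, by simp [Valid, hv], (trans_RE n s hv.2 i).run m x y (Or.inl hg) h ht⟩

theorem enc_done (j p : ℕ) : encB ⟨.Dn, j, p⟩ =
    (((List.replicate (p + 1) 0 ++ [1]) ++ (List.replicate (p + 1) 0 ++ [1]) : List ℕ)).map
      Sum.inr := by
  have : ∀ X : SForm ℕ, List.replicate p (Sum.inr 0 : Symb ℕ) ++ Sum.inr 0 :: X =
    Sum.inr 0 :: (List.replicate p (Sum.inr 0) ++ X) := by
      intro X
      rw [← List.cons_append, ← List.replicate_succ, List.replicate_succ']; simp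
  simp [encB, wrap, core, this, List.replicate_succ]

theorem form_done (bs : List Blk) (p : ℕ) (h : ∀ b ∈ bs, b.κ = .Dn ∧ b.p = p) :
    form (Sum.inr 1) bs = (sepWord bs.length (p + 1)).map Sum.inr := by
  suffices H : bs.flatMap encB = ((List.replicate (2 * bs.length)
      (List.replicate (p + 1) 0 ++ [1])).flatten).map Sum.inr by
    simp only [form, sepWord, List.map_cons, H]
  induction bs with
  | nil => simp
  | cons b bs ih =>
    rw [List.flatMap_cons, ih (fun b hb => h b (by simp [hb]))]
    rcases b with ⟨κ, j, q⟩
    have := h ⟨κ, j, q⟩ (by simp)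
    simp only at this
    obtain ⟨rfl, rfl⟩ := this
    rw [enc_done, List.length_cons, show 2 * (bs.length + 1) = (2 * bs.length + 1) + 1 by ring,
      List.replicate_succ (n := 2 * bs.length + 1), List.replicate_succ (n := 2 * bs.length),
      List.flatten_cons, List.flatten_cons]
    simp only [List.map_append, List.append_assoc]

theorem sound (n k : ℕ) (hn : 1 ≤ n) (w : List ℕ)
    (hw : w ∈ (GG n k).lang (Mode.conj Mode.t (Mode.le (k + 1)))) : w ∈ sepLang (n * k) := by
  have key : ∀ y, Relation.TransGen ((GG n k).ModeStep (Mode.conj Mode.t (Mode.le (k + 1))))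
      [Sum.inl (GG n k).start] y → Inv n (n * k) y := by
    intro y hy
    induction hy with
    | single h =>
      obtain ⟨i, m, h1, h2⟩ := h
      exact Inv_step n k i hn m _ _ (Or.inl rfl) h1 h2.1
    | tail _ h ih =>
      obtain ⟨i, m, h1, h2⟩ := h
      exact Inv_step n k i hn m _ _ ih h1 h2.1
  have hno : ∀ a, (Sum.inl a : Symb ℕ) ∉ w.map Sum.inr := by simp
  rcases key _ hw with h | ⟨σ, hv, bs, hl, hb, he⟩
  · exact absurd (by rw [h]; simp) (hno 0)
  · have hs : ∀ a, sym n σ ≠ Sum.inl a := by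
      intro a ha
      exact hno a (by rw [he, ha]; simp [form])
    cases σ with
    | cyc s i => exact absurd rfl (hs _)
    | E s i => exact absurd rfl (hs _)
    | F s i =>
      have hsn : s = n := by
        by_contra hne
        exact hs (6 * s + 2) (by simp [sym, sF, hne])
      subst hsn
      have e : sym s (.F s i) = Sum.inr 1 := by simp [sym, sF]
      rw [e, form_done bs i.toNat ?_, hl] at he
      · exact ⟨i.toNat + 1, by omega, List.map_injective_iff.mpr Sum.inr_injective he⟩
      · intro b hbm
        have := hb b hbm
        simp only [ok] at this
        refine ⟨?_, by omega⟩
        rcases this.2.2 with h | h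
        · exact h.2
        · omega

theorem steps_blk (P : List (Rule ℕ)) (r : Rule ℕ) (hr : r ∈ P) (c : Symb ℕ) (b b' : Blk)
    (hb : ntOf b.κ b.j = some r.1) (hw : wrap b.p r.2 = encB b') (bs2 : List Blk) (k : ℕ)
    (bs1 : List Blk) :
    StepsN P k (form c (bs1 ++ (List.replicate k b ++ bs2)))
      (form c (bs1 ++ (List.replicate k b' ++ bs2))) := by
  induction k generalizing bs1 with
  | zero => rfl
  | succ k ih =>
    refine ⟨_, step_blk P r hr c bs1 b b' (List.replicate k b ++ bs2) hb hw, ?_⟩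
    have := ih (bs1 ++ [b'])
    simpa [List.replicate_succ] using this

theorem blocks_split (n k m : ℕ) (hm : m < n) (g g' : ℕ → Blk) (hg : ∀ j, j < n → j ≠ m → g' j = g j) :
    ∃ bs1 bs2, blocks n k g = bs1 ++ (List.replicate k (g m) ++ bs2) ∧
      blocks n k g' = bs1 ++ (List.replicate k (g' m) ++ bs2) := by
  obtain ⟨l1, l2, hl⟩ := List.append_of_mem (List.mem_range.mpr hm)
  have hnd := List.nodup_range (n := n)
  rw [hl] at hnd
  have h1 : m ∉ l1 := by
    intro h
    have := List.nodup_append.mp hnd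
    exact this.2.2 m h m (by simp) rfl
  have h2 : m ∉ l2 := by
    have := (List.nodup_append.mp hnd).2.1
    exact (List.nodup_cons.mp this).1
  have hl1 : ∀ j ∈ l1, j < n := fun j hj => List.mem_range.mp (by rw [hl]; simp [hj])
  have hl2 : ∀ j ∈ l2, j < n := fun j hj => List.mem_range.mp (by rw [hl]; simp [hj])
  have e : ∀ l : List ℕ, (∀ j ∈ l, j < n) → m ∉ l → l.flatMap (fun j => List.replicate k (g' j)) =
      l.flatMap (fun j => List.replicate k (g j)) := by
    intro l hln hl
    apply List.flatMap_congr
    intro j hj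
    rw [hg j (hln j hj) (fun h => hl (h ▸ hj))]
  refine ⟨l1.flatMap (fun j => List.replicate k (g j)), l2.flatMap (fun j => List.replicate k (g j)),
    ?_, ?_⟩
  · simp [blocks, hl]
  · simp [blocks, hl, e l1 hl1 h1, e l2 hl2 h2]

theorem blocks_congr (n k : ℕ) (g g' : ℕ → Blk) (hg : ∀ j < n, g' j = g j) :
    blocks n k g' = blocks n k g := by
  apply List.flatMap_congr
  intro j hj
  rw [hg j (List.mem_range.mp hj)]

theorem comp_steps (P : List (Rule ℕ)) (n k m : ℕ) (hm : m < n) (g g' : ℕ → Blk)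
    (hg : ∀ j, j < n → j ≠ m → g' j = g j) (r : Rule ℕ) (hr : r ∈ P)
    (hb : ntOf (g m).κ (g m).j = some r.1) (hw : wrap (g m).p r.2 = encB (g' m))
    (a : ℕ) (c' : Symb ℕ) (hc : (a, [c']) ∈ P) :
    StepsN P (k + 1) (form (Sum.inl a) (blocks n k g)) (form c' (blocks n k g')) := by
  obtain ⟨bs1, bs2, e1, e2⟩ := blocks_split n k m hm g g' hg
  refine ⟨_, step_ctrl P (a, [c']) hc c' rfl _, ?_⟩
  rw [e1, e2]
  exact steps_blk P r hr c' _ _ hb hw bs2 k bs1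

theorem no_step (P : List (Rule ℕ)) (n k : ℕ) (c : Symb ℕ) (g : ℕ → Blk)
    (hc : ∀ r ∈ P, c ≠ Sum.inl r.1)
    (hg : ∀ j < n, ∀ r ∈ P, ntOf (g j).κ (g j).j ≠ some r.1) :
    ¬ ∃ z, RStep P (form c (blocks n k g)) z := by
  rintro ⟨z, hz⟩
  rcases step_inv _ _ _ _ hz with ⟨r, hr, h1, _⟩ | ⟨r, hr, bs1, b, bs2, e, h1, _⟩
  · exact hc r hr h1
  · obtain ⟨j, hj, rfl⟩ := mem_blocks n k g b (by rw [e]; simp)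
    exact hg j hj r hr h1

def gC (n s h : ℕ) (j : ℕ) : Blk :=
  if s ≤ j then ⟨.B, j, h⟩ else if s ≤ j + n then ⟨.A, j, h⟩ else ⟨.B, j, h + 1⟩

def gF (m h : ℕ) (j : ℕ) : Blk := if j < m then ⟨.Dn, j, h⟩ else ⟨.B, j, h⟩

def gE (c h : ℕ) (j : ℕ) : Blk :=
  if j < c then ⟨.Dn, j, h⟩ else if j = c then ⟨.T, j, h⟩ else ⟨.B, j, h⟩

abbrev MS (n k : ℕ) := (GG n k).ModeStep (Mode.conj Mode.t (Mode.le (k + 1)))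

theorem mk_step (n k c m : ℕ) (hc : c < 2 * n + 1) (x y : SForm ℕ) (hm : m ≤ k + 1)
    (h : StepsN (comp n k c) m x y) (ht : ¬ ∃ z, RStep (comp n k c) y z) : MS n k x y :=
  ⟨⟨c, hc⟩, m, h, ht, hm⟩

theorem ms_cyc (n k c h : ℕ) (hc : c < 2 * n) :
    MS n k (form (sC n c) (blocks n k (gC n c h))) (form (sC n (c + 1)) (blocks n k (gC n (c + 1) h))) := by
  have e : comp n k c = compP n k c := by simp [comp]; omega
  have es : sC n c = Sum.inl (6 * c + 1) := by simp [sC]; omega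
  refine mk_step n k c (k + 1) (by omega) _ _ le_rfl ?_ ?_
  · rw [e, es]
    by_cases h1 : c < n
    · refine comp_steps _ n k c h1 _ _ ?_ (6 * c + 5, [Sum.inl (6 * c + 4)]) ?_ ?_ ?_ _ _ ?_
      · intro j hjn hj
        unfold gC
        split_ifs <;> first | rfl | omega
      · rw [mem_compP]; simp [h1]
      · simp [gC, ntOf]
      · simp [gC, h1]; rw [if_pos (by omega)]; rfl
      · rw [mem_compP]; simp
    · refine comp_steps _ n k (c - n) (by omega) _ _ ?_
        (6 * (c - n) + 4, [Sum.inr 0, Sum.inl (6 * (c - n) + 5), Sum.inr 0]) ?_ ?_ ?_ _ _ ?_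
      · intro j hjn hj
        unfold gC
        split_ifs <;> first | rfl | omega
      · rw [mem_compP]; simp; omega
      · unfold gC; rw [if_neg (by omega), if_pos (by omega)]; rfl
      · unfold gC; rw [if_neg (by omega), if_pos (by omega), if_neg (by omega), if_neg (by omega)]
        exact wrap_grow _ _
      · rw [mem_compP]; simp
  · rw [e]
    apply no_step
    · exact (trans_cyc n k c hc 0).hc'
    · intro j hj r hr hh
      rcases compP_blk _ r hr hh with ⟨a1, a2, a3, a4⟩ | ⟨a1, a2, a3, a4⟩ | ⟨a1, a2, a3, a4⟩ <;>
      · unfold gC at a2 a3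
        split_ifs at a2 a3 <;> first | (cases a3; done) | (simp only at a2; omega)

theorem ms_R0 (n k h : ℕ) (hk : 1 ≤ k) :
    MS n k (form (sC n 0) (blocks n k (gC n 0 h))) (form (sF n 0) (blocks n k (gF 0 h))) := by
  have e : comp n k (2 * n) = compR n := by simp [comp]
  have eb : gC n 0 h = gF 0 h := by funext j; simp [gC, gF]
  have es : sC n 0 = Sum.inl 1 := by simp [sC]
  refine mk_step n k (2 * n) 1 (by omega) _ _ (by omega) ?_ ?_
  · rw [e, eb, es]
    refine ⟨_, step_ctrl _ (1, [sF n 0]) ?_ _ rfl _, rfl⟩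
    rw [mem_compR]; simp
  · rw [e]
    apply no_step
    · exact fun r hr => sF_ne 0 r hr
    · intro j hj r hr hh
      rcases compR_blk _ r hr hh with ⟨a3, a4⟩ | ⟨a3, a4⟩ <;> simp [gF] at a3

theorem ms_F (n k c h : ℕ) (hc : c < n) :
    MS n k (form (sF n c) (blocks n k (gF c h)))
      (form (Sum.inl (6 * (c + 1) + 3)) (blocks n k (gE c h))) := by
  have e : comp n k c = compP n k c := by simp [comp]; omega
  have es : sF n c = Sum.inl (6 * c + 2) := by simp [sF]; omega
  refine mk_step n k c (k + 1) (by omega) _ _ le_rfl ?_ ?_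
  · rw [e, es]
    refine comp_steps _ n k c hc _ _ ?_ (6 * c + 5, [Sum.inl (6 * c + 6)]) ?_ ?_ ?_ _ _ ?_
    · intro j hjn hj
      simp [gF, gE, hj]
    · rw [mem_compP]; simp [hc]
    · simp [gF, ntOf]
    · simp [gF, gE]; rfl
    · rw [mem_compP]; simp
  · rw [e]
    apply no_step
    · exact (trans_F n k c hc 0).hc'
    · intro j hj r hr hh
      rcases compP_blk _ r hr hh with ⟨a1, a2, a3, a4⟩ | ⟨a1, a2, a3, a4⟩ | ⟨a1, a2, a3, a4⟩ <;>
      · unfold gE at a2 a3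
        split_ifs at a2 a3 <;> first | omega | (cases a3; done) | (simp only at a2; omega)

theorem ms_E (n k c h : ℕ) (hc : c < n) :
    MS n k (form (Sum.inl (6 * (c + 1) + 3)) (blocks n k (gE c h)))
      (form (sF n (c + 1)) (blocks n k (gF (c + 1) h))) := by
  have e : comp n k (2 * n) = compR n := by simp [comp]
  refine mk_step n k (2 * n) (k + 1) (by omega) _ _ le_rfl ?_ ?_
  · rw [e]
    refine comp_steps _ n k c hc _ _ ?_ (6 * c + 6, [Sum.inr 0, Sum.inr 1, Sum.inr 0]) ?_ ?_ ?_ _ _ ?_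
    · intro j hjn hj
      unfold gF gE
      split_ifs <;> first | rfl | omega
    · rw [mem_compR]; simp [hc]
    · simp [gE, ntOf]
    · simp [gF, gE]; rfl
    · rw [mem_compR]; right; left; exact ⟨c + 1, by omega, rfl⟩
  · rw [e]
    apply no_step
    · exact fun r hr => sF_ne _ r hr
    · intro j hj r hr hh
      rcases compR_blk _ r hr hh with ⟨a3, a4⟩ | ⟨a3, a4⟩ <;>
      · unfold gF at a3
        split_ifs at a3

theorem ms_start (n k : ℕ) (hn : 1 ≤ n) :
    MS n k [Sum.inl 0] (form (sC n 0) (blocks n k (gC n 0 0))) := by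
  have e : comp n k (2 * n - 1) = compP n k (2 * n - 1) := by simp [comp]; omega
  have eb : gC n 0 0 = (fun j => ⟨.B, j, 0⟩) := by funext j; simp [gC]
  refine mk_step n k (2 * n - 1) 1 (by omega) _ _ (by omega) ?_ ?_
  · rw [e, eb]
    refine ⟨_, ⟨(0, form (sC n 0) (blocks n k (fun j => ⟨.B, j, 0⟩))), ?_, [], [], rfl, rfl⟩, ?_⟩
    · rw [mem_compP]
      iterate 9 right
      exact ⟨by omega, rfl⟩
    · simp [StepsN]
  · rw [e, eb]
    apply no_step
    · have := (trans_cyc n k (2 * n - 1) (by omega) 0).hc'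
      simpa [sym, sC, show 2 * n - 1 + 1 = 2 * n by omega] using this
    · intro j hj r hr hh
      rcases compP_blk _ r hr hh with ⟨a1, a2, a3, a4⟩ | ⟨a1, a2, a3, a4⟩ | ⟨a1, a2, a3, a4⟩
      · omega
      · cases a3
      · cases a3

theorem reach_cyc (n k h c : ℕ) (hc : c ≤ 2 * n) :
    Relation.ReflTransGen (MS n k) (form (sC n 0) (blocks n k (gC n 0 h)))
      (form (sC n c) (blocks n k (gC n c h))) := by
  induction c with
  | zero => exact .refl
  | succ c ih => exact (ih (by omega)).tail (ms_cyc n k c h (by omega))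

theorem reach_h (n k h : ℕ) (hn : 1 ≤ n) :
    Relation.TransGen (MS n k) [Sum.inl 0] (form (sC n 0) (blocks n k (gC n 0 h))) := by
  induction h with
  | zero => exact .single (ms_start n k hn)
  | succ h ih =>
    have h1 := reach_cyc n k h (2 * n) le_rfl
    have e1 : sC n (2 * n) = sC n 0 := by simp [sC]
    have e2 : blocks n k (gC n 0 (h + 1)) = blocks n k (gC n (2 * n) h) := by
      apply blocks_congr
      intro j hj
      unfold gC
      rw [if_pos (by omega), if_neg (by omega), if_neg (by omega)]
    rw [e1, ← e2] at h1
    exact ih.trans_left h1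

theorem reach_F (n k h c : ℕ) (hc : c ≤ n) :
    Relation.ReflTransGen (MS n k) (form (sF n 0) (blocks n k (gF 0 h)))
      (form (sF n c) (blocks n k (gF c h))) := by
  induction c with
  | zero => exact .refl
  | succ c ih => exact ((ih (by omega)).tail (ms_F n k c h (by omega))).tail (ms_E n k c h (by omega))

theorem complete (n k : ℕ) (hn : 1 ≤ n) (hk : 1 ≤ k) (w : List ℕ) (hw : w ∈ sepLang (n * k)) :
    w ∈ (GG n k).lang (Mode.conj Mode.t (Mode.le (k + 1))) := by
  obtain ⟨i, hi, rfl⟩ := hw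
  obtain ⟨h, rfl⟩ : ∃ h, i = h + 1 := ⟨i - 1, by omega⟩
  have h1 := ((reach_h n k h hn).tail (ms_R0 n k h hk)).trans_left (reach_F n k h n le_rfl)
  have e : sF n n = Sum.inr 1 := by simp [sF]
  rw [e, form_done _ h, blocks_length] at h1
  · exact h1
  · intro b hb
    obtain ⟨j, hj, rfl⟩ := mem_blocks _ _ _ _ hb
    simp [gF, hj]

theorem lamfree (n k : ℕ) : (GG n k).LamFree := by
  intro i r hr
  change r ∈ comp n k i at hr
  unfold comp at hr
  split_ifs at hr
  · rw [mem_compP] at hr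
    rcases hr with rfl | rfl | ⟨s, h1, h2, h3, h4, rfl⟩ | ⟨s, h1, h2, rfl⟩ | ⟨s, h1, h2, rfl⟩ |
      ⟨h1, rfl⟩ | ⟨h1, rfl⟩ | ⟨h1, rfl⟩ | ⟨h1, rfl⟩ | ⟨h1, rfl⟩ <;> simp [form]
  · rw [mem_compR] at hr
    rcases hr with rfl | ⟨s, h1, rfl⟩ | ⟨s, h1, h2, rfl⟩ | ⟨s, h1, rfl⟩ | ⟨s, h1, rfl⟩ <;> simp

/-- For all n, k ∈ ℕ (positive),
S_{n·k} ∈ L(CD_{2n+1}, CF−λ, (t∧≤k+1)). -/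
theorem stmt8 (n k : ℕ) (hn : 1 ≤ n) (hk : 1 ≤ k) :
    sepLang (n * k) ∈ CDFam ℕ true (2 * n + 1) (Mode.conj Mode.t (Mode.le (k + 1))) := by
  refine ⟨GG n k, le_rfl, fun _ => lamfree n k, ?_⟩
  have : (GG n k).lang (Mode.conj Mode.t (Mode.le (k + 1))) = sepLang (n * k) :=
    Set.ext fun w => ⟨sound n k hn w, complete n k hn hk w⟩
  unfold EqL
  rw [this]

end CDHybrid
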